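/- Let G be a graph with strict cardinal preferences sat. If M₁, M₂, M₃ are ordinally stable fractional matchings of (G, sat), then the median matching med(M₁, M₂, M₃) is a well-defined fractional matching of G and is ordinally stable. -/

import Mathlib

/-!
Write `M(x, ≽ y)` and `M(x, ≻ y)` for `wge` and `wgt`. Under strict preferences, linear stability
of `M` says that `M(u, ≽ v) + M(v, ≻ u) ≥ 1` on every edge, and ordinal stability implies it.

The key step is complementary slackness: an edge in the support of one linearly stable matching is
tight for every other. Weight the constraints of `N` by `M`, those of `M` by `N`, and add
everything up. An `M`-partner `v` and an `N`-partner `w` of a vertex `x` satisfy exactly one of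
`w ≽ v` and `v ≻ w`, so `x` contributes `2mn - m - n ≤ 0`, where `m, n ∈ [0, 1]` are the degrees of
`x` in `M` and `N`. As every weighted constraint is nonnegative, all of them vanish.

On an edge used by one of the three matchings the constraint is therefore tight for all three, so
passing to the other endpoint replaces each `Mᵢ(u, ≽ v)` by `1 - Mᵢ(v, ≻ u)`. The median commutes
with `t ↦ 1 - t`, so the median matching is symmetric. Its defining differences telescope along a
strict preference order, so its partial sums and degrees are the medians of those of the `Mᵢ`.
Finally, at every edge two of the three matchings saturate the same endpoint, and so does the
median.
-/

open Finset
open scoped Classical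

variable {V : Type*}

/-- Two agents find each other acceptable iff at least one of them assigns
positive satisfaction to the other. -/
def Adj (sat : V → V → ℚ) (u v : V) : Prop :=
  0 < sat u v ∨ 0 < sat v u

instance (sat : V → V → ℚ) (u v : V) : Decidable (Adj sat u v) :=
  inferInstanceAs (Decidable (0 < sat u v ∨ 0 < sat v u))

/-- `sat` describes a valid instance: satisfactions are nonnegative, an agent has
zero satisfaction towards itself, and the acceptability graph has no isolated vertices. -/
structure IsInstance [Fintype V] (sat : V → V → ℚ) : Prop where
  nonneg : ∀ u v, 0 ≤ sat u v
  sat_self : ∀ u, sat u u = 0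
  noIsolated : ∀ v, ∃ u, Adj sat v u

/-- `M` is a fractional matching of the acceptability graph of `sat`. -/
structure IsMatching [Fintype V] (sat : V → V → ℚ) (M : V → V → ℝ) : Prop where
  symm : ∀ u v, M u v = M v u
  nonneg : ∀ u v, 0 ≤ M u v
  support : ∀ u v, ¬ Adj sat u v → M u v = 0
  degree_le_one : ∀ v, ∑ u, M v u ≤ 1

/-- `M(x, ≽ y)`: total matching value of `x` with neighbours liked at least as much as `y`. -/
noncomputable def wge [Fintype V] (sat : V → V → ℚ) (M : V → V → ℝ) (x y : V) : ℝ :=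
  ∑ z ∈ Finset.univ.filter (fun z => Adj sat x z ∧ sat x y ≤ sat x z), M x z

/-- `M(x, ≻ y)`: total matching value of `x` with neighbours strictly preferred to `y`. -/
noncomputable def wgt [Fintype V] (sat : V → V → ℚ) (M : V → V → ℝ) (x y : V) : ℝ :=
  ∑ z ∈ Finset.univ.filter (fun z => Adj sat x z ∧ sat x y < sat x z), M x z

/-- Utility of agent `v` under matching `M`. -/
noncomputable def util [Fintype V] (sat : V → V → ℚ) (M : V → V → ℝ) (v : V) : ℝ :=
  ∑ u, (sat v u : ℝ) * M v u

/-- Social welfare of a matching. -/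
noncomputable def welfare [Fintype V] (sat : V → V → ℚ) (M : V → V → ℝ) : ℝ :=
  ∑ v, util sat M v

/-- Ordinal stability: no edge is ordinally blocking. -/
def OrdStable [Fintype V] (sat : V → V → ℚ) (M : V → V → ℝ) : Prop :=
  ∀ u v, Adj sat u v → ¬ (wge sat M u v < 1 ∧ wge sat M v u < 1)

/-- Cardinal stability: no edge is cardinally blocking. -/
def CardStable [Fintype V] (sat : V → V → ℚ) (M : V → V → ℝ) : Prop :=
  ∀ u v, Adj sat u v → ¬ (util sat M u < (sat u v : ℝ) ∧ util sat M v < (sat v u : ℝ))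

/-- Linear stability: no edge is linearly blocking. -/
def LinStable [Fintype V] (sat : V → V → ℚ) (M : V → V → ℝ) : Prop :=
  ∀ u v, Adj sat u v → ¬ (wge sat M u v + wge sat M v u - M u v < 1)

/-- Strict preferences: no ties among distinct neighbours. -/
def StrictPrefs (sat : V → V → ℚ) : Prop :=
  ∀ v x y, Adj sat v x → Adj sat v y → x ≠ y → sat v x ≠ sat v y

/-- The acceptability graph is bipartite with parts `U` and its complement. -/
def BipartiteWith (sat : V → V → ℚ) (U : Set V) : Prop :=
  ∀ u v, Adj sat u v → (u ∈ U ↔ v ∉ U)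

/-- Integral matching. -/
def IntegralMatching (M : V → V → ℝ) : Prop := ∀ u v, M u v = 0 ∨ M u v = 1

/-- Number of fully matched agents. -/
noncomputable def nfully [Fintype V] (M : V → V → ℝ) : ℕ :=
  (Finset.univ.filter (fun v => ∑ u, M v u = (1 : ℝ))).card

/-- The median (second largest) of three reals. -/
noncomputable def mid3 (a b c : ℝ) : ℝ :=
  a + b + c - max a (max b c) - min a (min b c)

/-- The median matching `med(M₁, M₂, M₃)` (computed from the perspective of the first
endpoint of each edge). -/
noncomputable def medM [Fintype V] (sat : V → V → ℚ) (M₁ M₂ M₃ : V → V → ℝ) :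
    V → V → ℝ := fun x y =>
  if Adj sat x y then
    mid3 (wge sat M₁ x y) (wge sat M₂ x y) (wge sat M₃ x y) -
      mid3 (wgt sat M₁ x y) (wgt sat M₂ x y) (wgt sat M₃ x y)
  else 0

section Median

variable {a b c a' b' c' : ℝ}

lemma le_mid3_iff {t : ℝ} :
    t ≤ mid3 a b c ↔ (t ≤ a ∧ t ≤ b) ∨ (t ≤ a ∧ t ≤ c) ∨ (t ≤ b ∧ t ≤ c) := by
  unfold mid3
  grind

lemma mid3_mono (ha : a ≤ a') (hb : b ≤ b') (hc : c ≤ c') : mid3 a b c ≤ mid3 a' b' c' := by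
  have h := le_mid3_iff.mp (le_refl (mid3 a b c))
  exact le_mid3_iff.mpr <|
    h.imp (And.imp ha.trans' hb.trans') <| .imp (And.imp ha.trans' hc.trans') <|
      And.imp hb.trans' hc.trans'

@[simp]
lemma mid3_self (a : ℝ) : mid3 a a a = a := by
  simp only [mid3, max_self, min_self]
  ring

lemma mid3_const_sub (t a b c : ℝ) : mid3 (t - a) (t - b) (t - c) = t - mid3 a b c := by
  unfold mid3
  grind

lemma le_mid3_or_le_mid3 {s t : ℝ} (ha : s ≤ a ∨ t ≤ a') (hb : s ≤ b ∨ t ≤ b')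
    (hc : s ≤ c ∨ t ≤ c') : s ≤ mid3 a b c ∨ t ≤ mid3 a' b' c' := by
  rw [le_mid3_iff, le_mid3_iff]
  tauto

end Median

section RankedSums

variable {ι α : Type*} [LinearOrder α] {s : Finset ι}

lemma sum_filter_le_sub_filter_lt {A : Type*} [AddCommGroup A] {p : ι → α}
    (hp : Set.InjOn p s) (G : Finset ι → A) :
    ∑ i ∈ s, (G {j ∈ s | p i ≤ p j} - G {j ∈ s | p i < p j}) = G s - G ∅ := by
  induction s using Finset.induction_on_min_value p with
  | empty => simp
  | insert a s ha hmin ih =>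
    have hlt : ∀ i ∈ s, p a < p i := fun i hi =>
      (hmin i hi).lt_of_ne fun h =>
        ha (hp (mem_insert_self a s) (mem_insert_of_mem hi) h ▸ hi)
    have hle_a : ({j ∈ insert a s | p a ≤ p j} : Finset ι) = insert a s :=
      filter_true_of_mem (by simpa using hmin)
    have hlt_a : ({j ∈ insert a s | p a < p j} : Finset ι) = s := by
      rw [filter_insert, if_neg (lt_irrefl _), filter_true_of_mem hlt]
    have hsum_s : ∑ i ∈ s, (G {j ∈ insert a s | p i ≤ p j} - G {j ∈ insert a s | p i < p j}) =
        G s - G ∅ := by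
      rw [← ih (hp.mono (by simp))]
      refine sum_congr rfl fun i hi => ?_
      rw [filter_insert, if_neg (hlt i hi).not_ge, filter_insert, if_neg (hlt i hi).not_gt]
    rw [sum_insert ha, hle_a, hlt_a, hsum_s, sub_add_sub_cancel]

lemma sum_mul_sum_filter_le_add_sum_mul_sum_filter_lt {R : Type*} [CommSemiring R] (s : Finset ι)
    (p : ι → α) (f g : ι → R) :
    ∑ i ∈ s, f i * ∑ j ∈ s with p i ≤ p j, g j + ∑ j ∈ s, g j * ∑ i ∈ s with p j < p i, f i =
      (∑ i ∈ s, f i) * ∑ j ∈ s, g j := by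
  have hlt : ∑ j ∈ s, g j * ∑ i ∈ s with p j < p i, f i =
      ∑ i ∈ s, f i * ∑ j ∈ s with ¬ p i ≤ p j, g j := by
    simp only [not_le, mul_sum, sum_filter]
    rw [sum_comm]
    simp only [mul_ite, mul_zero, mul_comm]
  simp only [hlt, ← sum_add_distrib, ← mul_add, sum_filter_add_sum_filter_not, sum_mul]

end RankedSums

lemma Adj.symm {sat : V → V → ℚ} {u v : V} (h : Adj sat u v) : Adj sat v u :=
  Or.symm h

lemma StrictPrefs.injOn {sat : V → V → ℚ} (hstrict : StrictPrefs sat) (x : V) :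
    Set.InjOn (sat x) {z | Adj sat x z} := fun y hy z hz =>
  not_imp_not.mp (hstrict x y z hy hz)

section PartialSums

variable [Fintype V] {sat : V → V → ℚ} {M : V → V → ℝ} {x y : V}

lemma sum_filter_adj_and {f : V → ℝ} (hf : ∀ z, ¬ Adj sat x z → f z = 0) (p : V → Prop)
    [DecidablePred p] : ∑ z with Adj sat x z ∧ p z, f z = ∑ z with p z, f z := by
  simp_rw [and_comm (a := Adj sat x _), ← filter_filter]
  exact sum_filter_of_ne fun z _ => not_imp_comm.mp (hf z)

lemma IsMatching.wge_eq_sum_filter (hM : IsMatching sat M) (x y : V) :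
    wge sat M x y = ∑ z with sat x y ≤ sat x z, M x z :=
  sum_filter_adj_and (hM.support x) _

lemma IsMatching.wgt_eq_sum_filter (hM : IsMatching sat M) (x y : V) :
    wgt sat M x y = ∑ z with sat x y < sat x z, M x z :=
  sum_filter_adj_and (hM.support x) _

lemma IsMatching.le_wge (hM : IsMatching sat M) (h : Adj sat x y) : M x y ≤ wge sat M x y :=
  single_le_sum (fun z _ => hM.nonneg x z) (by simp [h])

lemma IsMatching.wgt_le_wge (hM : IsMatching sat M) (x y : V) : wgt sat M x y ≤ wge sat M x y :=
  sum_le_sum_of_subset_of_nonneg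
    (monotone_filter_right _ fun _ _ => And.imp_right le_of_lt) fun z _ _ => hM.nonneg x z

lemma StrictPrefs.wge_eq_add_wgt (hstrict : StrictPrefs sat) (M : V → V → ℝ) (h : Adj sat x y) :
    wge sat M x y = M x y + wgt sat M x y := by
  have hinsert : univ.filter (fun z => Adj sat x z ∧ sat x y ≤ sat x z) =
      insert y (univ.filter fun z => Adj sat x z ∧ sat x y < sat x z) := by
    ext z
    have hinj : Adj sat x z → sat x y = sat x z → y = z := fun hz => hstrict.injOn x h hz
    simp only [mem_filter, mem_univ, true_and, mem_insert]
    grind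
  rw [wge, hinsert, sum_insert (by simp), wgt]

lemma OrdStable.linStable (hOS : OrdStable sat M) (hM : IsMatching sat M) : LinStable sat M := by
  intro u v h hblock
  have hu := hM.le_wge h
  have hv := hM.le_wge h.symm
  have hsymm := hM.symm u v
  exact hOS u v h ⟨by linarith, by linarith⟩

end PartialSums

section ComplementarySlackness

variable [Fintype V] {sat : V → V → ℚ} {M N : V → V → ℝ} {u v : V}

/-- The slack of the linear stability constraint `M(u, ≽ v) + M(v, ≻ u) ≥ 1` of the edge `{u, v}`.
This asymmetric form, equal to `M(u, ≽ v) + M(v, ≽ u) - M u v - 1` under strict preferences, is the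
one in which every pair of partners of a vertex is counted once. -/
noncomputable def linSlack (sat : V → V → ℚ) (M : V → V → ℝ) (u v : V) : ℝ :=
  wge sat M u v + wgt sat M v u - 1

lemma LinStable.linSlack_nonneg (hLS : LinStable sat M) (hstrict : StrictPrefs sat)
    (hM : IsMatching sat M) (h : Adj sat u v) : 0 ≤ linSlack sat M u v := by
  have hge := not_lt.mp (hLS u v h)
  rw [hstrict.wge_eq_add_wgt M h.symm, hM.symm v u] at hge
  rw [linSlack]
  linarith

lemma LinStable.mul_linSlack_nonneg (hLS : LinStable sat N) (hstrict : StrictPrefs sat)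
    (hM : IsMatching sat M) (hN : IsMatching sat N) (u v : V) :
    0 ≤ M u v * linSlack sat N u v := by
  by_cases h : Adj sat u v
  · exact mul_nonneg (hM.nonneg u v) (hLS.linSlack_nonneg hstrict hN h)
  · rw [hM.support u v h, zero_mul]

lemma sum_mul_wge_add_sum_mul_wgt (hM : IsMatching sat M) (hN : IsMatching sat N) (x : V) :
    ∑ y, M x y * wge sat N x y + ∑ y, N x y * wgt sat M x y = (∑ y, M x y) * ∑ y, N x y := by
  simp only [hN.wge_eq_sum_filter, hM.wgt_eq_sum_filter]
  exact sum_mul_sum_filter_le_add_sum_mul_sum_filter_lt univ (sat x) (M x) (N x)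

lemma sum_sum_mul_linSlack (hM : IsMatching sat M) (N : V → V → ℝ) :
    ∑ u, ∑ v, M u v * linSlack sat N u v =
      ∑ x, (∑ y, M x y * wge sat N x y + ∑ y, M x y * wgt sat N x y - ∑ y, M x y) := by
  have hswap : ∑ u, ∑ v, M u v * wgt sat N v u = ∑ x, ∑ y, M x y * wgt sat N x y := by
    rw [sum_comm]
    simp only [hM.symm]
  simp only [linSlack, mul_sub, mul_add, mul_one, sum_sub_distrib, sum_add_distrib, hswap]

lemma sum_sum_mul_linSlack_add_nonpos (hM : IsMatching sat M) (hN : IsMatching sat N) :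
    ∑ u, ∑ v, M u v * linSlack sat N u v + ∑ u, ∑ v, N u v * linSlack sat M u v ≤ 0 := by
  rw [sum_sum_mul_linSlack hM, sum_sum_mul_linSlack hN, ← sum_add_distrib]
  refine sum_nonpos fun x _ => ?_
  have hMN := sum_mul_wge_add_sum_mul_wgt hM hN x
  have hNM := sum_mul_wge_add_sum_mul_wgt hN hM x
  have hmn_le_m : (∑ y, M x y) * ∑ y, N x y ≤ ∑ y, M x y :=
    mul_le_of_le_one_right (sum_nonneg fun y _ => hM.nonneg x y) (hN.degree_le_one x)
  have hnm_le_n : (∑ y, N x y) * ∑ y, M x y ≤ ∑ y, N x y :=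
    mul_le_of_le_one_right (sum_nonneg fun y _ => hN.nonneg x y) (hM.degree_le_one x)
  linarith

lemma linSlack_eq_zero_of_ne_zero (hstrict : StrictPrefs sat) (hM : IsMatching sat M)
    (hN : IsMatching sat N) (hLSM : LinStable sat M) (hLSN : LinStable sat N) (hne : M u v ≠ 0) :
    linSlack sat N u v = 0 := by
  have hMN := hLSN.mul_linSlack_nonneg hstrict hM hN
  have hNM := hLSM.mul_linSlack_nonneg hstrict hN hM
  have hMN_rows : ∀ x, 0 ≤ ∑ y, M x y * linSlack sat N x y := fun x =>
    sum_nonneg fun y _ => hMN x y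
  have hNM_total : 0 ≤ ∑ x, ∑ y, N x y * linSlack sat M x y :=
    sum_nonneg fun x _ => sum_nonneg fun y _ => hNM x y
  have htotal : ∑ x, ∑ y, M x y * linSlack sat N x y = 0 := by
    have hle := sum_sum_mul_linSlack_add_nonpos hM hN
    exact le_antisymm (by linarith) (sum_nonneg fun x _ => hMN_rows x)
  have hrow := (sum_eq_zero_iff_of_nonneg fun x _ => hMN_rows x).mp htotal u (mem_univ u)
  have hterm := (sum_eq_zero_iff_of_nonneg fun y _ => hMN u y).mp hrow v (mem_univ v)
  exact (mul_eq_zero.mp hterm).resolve_left hne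

end ComplementarySlackness

section MedianMatching

variable [Fintype V] {sat : V → V → ℚ} {M₁ M₂ M₃ : V → V → ℝ} {u v x y : V}

lemma medM_of_adj (h : Adj sat x y) : medM sat M₁ M₂ M₃ x y =
    mid3 (wge sat M₁ x y) (wge sat M₂ x y) (wge sat M₃ x y) -
      mid3 (wgt sat M₁ x y) (wgt sat M₂ x y) (wgt sat M₃ x y) :=
  if_pos h

lemma medM_of_not_adj (h : ¬ Adj sat x y) : medM sat M₁ M₂ M₃ x y = 0 :=
  if_neg h

lemma sum_medM_of_upper (hstrict : StrictPrefs sat) (M₁ M₂ M₃ : V → V → ℝ) {s : Finset V}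
    (hadj : ∀ z ∈ s, Adj sat x z)
    (hupper : ∀ z ∈ s, ∀ w, Adj sat x w → sat x z ≤ sat x w → w ∈ s) :
    ∑ z ∈ s, medM sat M₁ M₂ M₃ x z =
      mid3 (∑ z ∈ s, M₁ x z) (∑ z ∈ s, M₂ x z) (∑ z ∈ s, M₃ x z) := by
  let G : Finset V → ℝ := fun t => mid3 (∑ z ∈ t, M₁ x z) (∑ z ∈ t, M₂ x z) (∑ z ∈ t, M₃ x z)
  have hge : ∀ z ∈ s, univ.filter (fun w => Adj sat x w ∧ sat x z ≤ sat x w) =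
      {w ∈ s | sat x z ≤ sat x w} := by grind
  have hgt : ∀ z ∈ s, univ.filter (fun w => Adj sat x w ∧ sat x z < sat x w) =
      {w ∈ s | sat x z < sat x w} := by grind
  calc ∑ z ∈ s, medM sat M₁ M₂ M₃ x z
      = ∑ z ∈ s, (G {w ∈ s | sat x z ≤ sat x w} - G {w ∈ s | sat x z < sat x w}) := by
        refine sum_congr rfl fun z hz => ?_
        simp only [medM_of_adj (hadj z hz), wge, wgt, hge z hz, hgt z hz, G]
    _ = G s - G ∅ := sum_filter_le_sub_filter_lt ((hstrict.injOn x).mono hadj) G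
    _ = G s := by simp [G]

lemma wge_medM (hstrict : StrictPrefs sat) (M₁ M₂ M₃ : V → V → ℝ) (x y : V) :
    wge sat (medM sat M₁ M₂ M₃) x y =
      mid3 (wge sat M₁ x y) (wge sat M₂ x y) (wge sat M₃ x y) :=
  sum_medM_of_upper hstrict M₁ M₂ M₃ (by simp +contextual) (by grind)

lemma sum_medM (hstrict : StrictPrefs sat) (hM₁ : IsMatching sat M₁) (hM₂ : IsMatching sat M₂)
    (hM₃ : IsMatching sat M₃) (x : V) :
    ∑ y, medM sat M₁ M₂ M₃ x y = mid3 (∑ y, M₁ x y) (∑ y, M₂ x y) (∑ y, M₃ x y) := by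
  have sum_adj {f : V → ℝ} (hf : ∀ y, ¬ Adj sat x y → f y = 0) :
      ∑ y with Adj sat x y, f y = ∑ y, f y :=
    sum_filter_of_ne fun y _ => not_imp_comm.mp (hf y)
  rw [← sum_adj fun _ => medM_of_not_adj, ← sum_adj (hM₁.support x), ← sum_adj (hM₂.support x),
    ← sum_adj (hM₃.support x)]
  exact sum_medM_of_upper hstrict M₁ M₂ M₃ (by simp) (by simp +contextual)

lemma medM_nonneg (hM₁ : IsMatching sat M₁) (hM₂ : IsMatching sat M₂) (hM₃ : IsMatching sat M₃)
    (x y : V) : 0 ≤ medM sat M₁ M₂ M₃ x y := by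
  by_cases h : Adj sat x y
  · rw [medM_of_adj h, sub_nonneg]
    exact mid3_mono (hM₁.wgt_le_wge x y) (hM₂.wgt_le_wge x y) (hM₃.wgt_le_wge x y)
  · rw [medM_of_not_adj h]

lemma medM_eq_zero (hstrict : StrictPrefs sat) (h₁ : M₁ x y = 0) (h₂ : M₂ x y = 0)
    (h₃ : M₃ x y = 0) : medM sat M₁ M₂ M₃ x y = 0 := by
  by_cases h : Adj sat x y
  · simp only [medM_of_adj h, hstrict.wge_eq_add_wgt _ h, h₁, h₂, h₃, zero_add, sub_self]
  · exact medM_of_not_adj h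

lemma medM_comm_of_linSlack_eq_zero (h : Adj sat u v)
    (huv₁ : linSlack sat M₁ u v = 0) (huv₂ : linSlack sat M₂ u v = 0)
    (huv₃ : linSlack sat M₃ u v = 0) (hvu₁ : linSlack sat M₁ v u = 0)
    (hvu₂ : linSlack sat M₂ v u = 0) (hvu₃ : linSlack sat M₃ v u = 0) :
    medM sat M₁ M₂ M₃ u v = medM sat M₁ M₂ M₃ v u := by
  have wge_eq {N : V → V → ℝ} {a b : V} (ht : linSlack sat N a b = 0) :
      wge sat N a b = 1 - wgt sat N b a :=
    eq_sub_of_add_eq (sub_eq_zero.mp ht)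
  rw [medM_of_adj h, medM_of_adj h.symm, wge_eq huv₁, wge_eq huv₂, wge_eq huv₃, wge_eq hvu₁,
    wge_eq hvu₂, wge_eq hvu₃, mid3_const_sub, mid3_const_sub]
  ring

lemma medM_comm (hstrict : StrictPrefs sat)
    (hM₁ : IsMatching sat M₁) (hM₂ : IsMatching sat M₂) (hM₃ : IsMatching sat M₃)
    (hLS₁ : LinStable sat M₁) (hLS₂ : LinStable sat M₂) (hLS₃ : LinStable sat M₃) (u v : V) :
    medM sat M₁ M₂ M₃ u v = medM sat M₁ M₂ M₃ v u := by
  by_cases hzero : M₁ u v = 0 ∧ M₂ u v = 0 ∧ M₃ u v = 0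
  · obtain ⟨h₁, h₂, h₃⟩ := hzero
    rw [medM_eq_zero hstrict h₁ h₂ h₃, medM_eq_zero hstrict (hM₁.symm u v ▸ h₁)
      (hM₂.symm u v ▸ h₂) (hM₃.symm u v ▸ h₃)]
  obtain ⟨M, hM, hLS, hne⟩ : ∃ M, IsMatching sat M ∧ LinStable sat M ∧ M u v ≠ 0 := by
    simp only [not_and_or] at hzero
    rcases hzero with h₁ | h₂ | h₃
    exacts [⟨M₁, hM₁, hLS₁, h₁⟩, ⟨M₂, hM₂, hLS₂, h₂⟩, ⟨M₃, hM₃, hLS₃, h₃⟩]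
  have hadj : Adj sat u v := not_imp_comm.mp (hM.support u v) hne
  have huv {N : V → V → ℝ} (hN : IsMatching sat N) (hLSN : LinStable sat N) :
      linSlack sat N u v = 0 :=
    linSlack_eq_zero_of_ne_zero hstrict hM hN hLS hLSN hne
  have hvu {N : V → V → ℝ} (hN : IsMatching sat N) (hLSN : LinStable sat N) :
      linSlack sat N v u = 0 :=
    linSlack_eq_zero_of_ne_zero hstrict hM hN hLS hLSN (hM.symm u v ▸ hne)
  exact medM_comm_of_linSlack_eq_zero hadj (huv hM₁ hLS₁) (huv hM₂ hLS₂) (huv hM₃ hLS₃)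
    (hvu hM₁ hLS₁) (hvu hM₂ hLS₂) (hvu hM₃ hLS₃)

lemma isMatching_medM (hstrict : StrictPrefs sat)
    (hM₁ : IsMatching sat M₁) (hM₂ : IsMatching sat M₂) (hM₃ : IsMatching sat M₃)
    (hLS₁ : LinStable sat M₁) (hLS₂ : LinStable sat M₂) (hLS₃ : LinStable sat M₃) :
    IsMatching sat (medM sat M₁ M₂ M₃) where
  symm := medM_comm hstrict hM₁ hM₂ hM₃ hLS₁ hLS₂ hLS₃
  nonneg := medM_nonneg hM₁ hM₂ hM₃
  support _ _ := medM_of_not_adj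
  degree_le_one x := calc
    ∑ y, medM sat M₁ M₂ M₃ x y = mid3 (∑ y, M₁ x y) (∑ y, M₂ x y) (∑ y, M₃ x y) :=
      sum_medM hstrict hM₁ hM₂ hM₃ x
    _ ≤ mid3 1 1 1 :=
      mid3_mono (hM₁.degree_le_one x) (hM₂.degree_le_one x) (hM₃.degree_le_one x)
    _ = 1 := mid3_self 1

lemma ordStable_medM (hstrict : StrictPrefs sat) (hOS₁ : OrdStable sat M₁)
    (hOS₂ : OrdStable sat M₂) (hOS₃ : OrdStable sat M₃) :
    OrdStable sat (medM sat M₁ M₂ M₃) := by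
  intro u v h
  have saturates {M : V → V → ℝ} (hOS : OrdStable sat M) :
      1 ≤ wge sat M u v ∨ 1 ≤ wge sat M v u := by
    simpa only [not_and_or, not_lt] using hOS u v h
  rw [wge_medM hstrict, wge_medM hstrict, not_and_or, not_lt, not_lt]
  exact le_mid3_or_le_mid3 (saturates hOS₁) (saturates hOS₂) (saturates hOS₃)

end MedianMatching

/-- for instances with strict preferences, the median of three ordinally
stable fractional matchings is a well-defined fractional matching (in particular it is
symmetric in the two endpoints of every edge) and it is ordinally stable. -/
theorem median_of_ordinallyStable_is_ordinallyStable [Fintype V]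
    (sat : V → V → ℚ) (hinst : IsInstance sat) (hstrict : StrictPrefs sat)
    (M₁ M₂ M₃ : V → V → ℝ)
    (hM₁ : IsMatching sat M₁) (hM₂ : IsMatching sat M₂) (hM₃ : IsMatching sat M₃)
    (hOS₁ : OrdStable sat M₁) (hOS₂ : OrdStable sat M₂) (hOS₃ : OrdStable sat M₃) :
    IsMatching sat (medM sat M₁ M₂ M₃) ∧ OrdStable sat (medM sat M₁ M₂ M₃) :=
  ⟨isMatching_medM hstrict hM₁ hM₂ hM₃ (hOS₁.linStable hM₁) (hOS₂.linStable hM₂)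
      (hOS₃.linStable hM₃),
    ordStable_medM hstrict hOS₁ hOS₂ hOS₃⟩
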